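/- arXiv:1205.1782 — 2 statements merged into one kernel-verified Lean document; each statement's English description precedes it below -/
import Mathlib

section
/- The set U equals the set of state-action occupancy frequencies of randomized policies, U = ⋃_{π∈Π_R} {u_π}, and it also equals the convex hull of the occupancy frequencies of deterministic policies, U = convexHull {u_π : π ∈ Π_D}. -/
open Matrix BigOperators

namespace DRADP

variable {S A K : Type*} [Fintype S] [Fintype A] [Fintype K] [DecidableEq S] [DecidableEq A]

/-- A randomized policy: nonnegative with rows summing to one. -/
def isPolicy (π : S → A → ℝ) : Prop :=
  (∀ s a, 0 ≤ π s a) ∧ ∀ s, ∑ a, π s a = 1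

/-- The randomized policy corresponding to a deterministic policy `p : S → A`. -/
def detPol (p : S → A) : S → A → ℝ := fun s a => if a = p s then 1 else 0

/-- Transition matrix `P_π` of a policy. -/
noncomputable def Pmat (P : S → A → S → ℝ) (π : S → A → ℝ) : Matrix S S ℝ :=
  Matrix.of fun s s' => ∑ a, P s a s' * π s a

/-- Reward vector `r_π` of a policy. -/
noncomputable def rvec (r : S → A → ℝ) (π : S → A → ℝ) : S → ℝ :=
  fun s => ∑ a, r s a * π s a

/-- State occupancy frequency `d_π = (1-γ)·∑_t γ^t (P_πᵀ)^t α`. -/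
noncomputable def dOcc (P : S → A → S → ℝ) (α : S → ℝ) (γ : ℝ) (π : S → A → ℝ) : S → ℝ :=
  fun s => (1 - γ) * ∑' t : ℕ, γ ^ t * (((Pmat P π)ᵀ ^ t) *ᵥ α) s

/-- State-action occupancy frequency `u_π(s,a) = d_π(s)·π(s,a)`. -/
noncomputable def uOcc (P : S → A → S → ℝ) (α : S → ℝ) (γ : ℝ) (π : S → A → ℝ) : S × A → ℝ :=
  fun w => dOcc P α γ π w.1 * π w.1 w.2

/-- Value function `v_π = ∑_t γ^t P_π^t r_π`. -/
noncomputable def vVal (P : S → A → S → ℝ) (r : S → A → ℝ) (γ : ℝ) (π : S → A → ℝ) : S → ℝ :=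
  fun s => ∑' t : ℕ, γ ^ t * ((Pmat P π ^ t) *ᵥ rvec r π) s

/-- The return `ρ(π) = αᵀ v_π`. -/
noncomputable def ret (P : S → A → S → ℝ) (r : S → A → ℝ) (α : S → ℝ) (γ : ℝ)
    (π : S → A → ℝ) : ℝ :=
  ∑ s, α s * vVal P r γ π s

/-- The matrix `A` with rows `A((s,a),·) = e_sᵀ − γ·P(s,a,·)`. -/
def Amat (P : S → A → S → ℝ) (γ : ℝ) : Matrix (S × A) S ℝ :=
  Matrix.of fun w s' => (if w.1 = s' then (1 : ℝ) else 0) - γ * P w.1 w.2 s'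

/-- The vector `b(s,a) = r(s,a)`. -/
def bvec (r : S → A → ℝ) : S × A → ℝ := fun w => r w.1 w.2

/-- `U = {u : u ≥ 0, Aᵀu = (1−γ)·α}`. -/
def Uset (P : S → A → S → ℝ) (α : S → ℝ) (γ : ℝ) : Set (S × A → ℝ) :=
  {u | (∀ w, 0 ≤ u w) ∧ (Amat P γ)ᵀ *ᵥ u = fun s => (1 - γ) * α s}

/-- The Bellman operator `L`. -/
noncomputable def bell (P : S → A → S → ℝ) (r : S → A → ℝ) (γ : ℝ) (v : S → ℝ) : S → ℝ :=
  fun s => ⨆ a : A, (r s a + γ * ∑ s', P s a s' * v s')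

/-- A deterministic policy `p` is greedy w.r.t. `v`. -/
def isGreedy (P : S → A → S → ℝ) (r : S → A → ℝ) (γ : ℝ) (p : S → A) (v : S → ℝ) : Prop :=
  ∀ s a, r s a + γ * ∑ s', P s a s' * v s' ≤ r s (p s) + γ * ∑ s', P s (p s) s' * v s'

/-- Approximate occupancy frequencies `Ũ(π)`. -/
def Utilde (P : S → A → S → ℝ) (α : S → ℝ) (γ : ℝ) (Φ : Matrix S K ℝ) (π : S → A → ℝ) :
    Set (S × A → ℝ) :=
  {u | (∀ w, 0 ≤ u w) ∧
    (Φᵀ *ᵥ ((Amat P γ)ᵀ *ᵥ u) = fun j => (1 - γ) * (Φᵀ *ᵥ α) j) ∧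
    ∀ w, u w ≤ π w.1 w.2}

/-- The distributionally robust return estimate
`ρ̃(π) = sup_{v∈Ṽ} (αᵀv − sup_{u∈Ũ(π)} uᵀ(Av − b)/(1−γ))`. -/
noncomputable def rhoTilde (P : S → A → S → ℝ) (r : S → A → ℝ) (α : S → ℝ) (γ : ℝ)
    (Φ : Matrix S K ℝ) (π : S → A → ℝ) : ℝ :=
  ⨆ x : K → ℝ, (∑ s, α s * (Φ *ᵥ x) s -
    sSup ((fun u : S × A → ℝ =>
      (∑ w, u w * ((Amat P γ *ᵥ (Φ *ᵥ x)) w - bvec r w)) / (1 - γ)) ''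
      Utilde P α γ Φ π))

/-- The set `G` of deterministic policies greedy w.r.t. some representable value function. -/
def greedySet (P : S → A → S → ℝ) (r : S → A → ℝ) (γ : ℝ) (Φ : Matrix S K ℝ) :
    Set (S → A → ℝ) :=
  {π | ∃ p : S → A, π = detPol p ∧ ∃ x : K → ℝ, isGreedy P r γ p (Φ *ᵥ x)}

end DRADP

open DRADP

/-!
For a fixed policy, the flow constraints `Aᵀu = (1 - γ)α` restricted to `u(s,a) = d(s) π(s,a)` read
`(1 - γ P_πᵀ) d = (1 - γ) α`, and the Neumann series shows that `d_π` is the unique solution. So the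
elements of `U` are occupancy frequencies of the policies obtained by normalising their rows.

For the convex hull, let two policies differ in a single state. A convex combination of their
occupancy frequencies lies in `U`, and normalising its rows gives a convex combination of the two
policies; suitable weights yield every such combination. Hence, for a convex set `H`, the policies
with occupancy frequency in `H` can be mixed one state at a time, which leads from the deterministic
policies to all the randomized ones.
-/

namespace DRADP

section Matrix

attribute [local instance] Matrix.linftyOpSeminormedAddCommGroup Matrix.linftyOpNormedRing

lemma linfty_opNorm_le {m n R : Type*} [Fintype m] [Fintype n] [SeminormedAddCommGroup R]
    {M : Matrix m n R} {c : ℝ} (hc : 0 ≤ c) (h : ∀ i, ∑ j, ‖M i j‖ ≤ c) : ‖M‖ ≤ c := by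
  lift c to NNReal using hc
  rw [linfty_opNorm_def, NNReal.coe_le_coe]
  refine Finset.sup_le fun i _ => NNReal.coe_le_coe.1 ?_
  simpa using h i

variable {n R : Type*} [Fintype n] [DecidableEq n] [NormedCommRing R] [CompleteSpace R]

-- Instance search does not identify the uniformity of this norm with the entrywise one.
local instance instHasSummableGeomSeriesMatrix : HasSummableGeomSeries (Matrix n n R) :=
  have : @CompleteSpace (Matrix n n R) PseudoMetricSpace.toUniformSpace :=
    inferInstanceAs (CompleteSpace (n → n → R))
  inferInstance

lemma isUnit_one_sub_transpose {M : Matrix n n R} (hM : ‖M‖ < 1) : IsUnit (1 - Mᵀ) := by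
  simpa using (isUnit_transpose (1 - M)).2 (isUnit_one_sub_of_norm_lt_one hM)

lemma hasSum_transpose_pow_mulVec {M : Matrix n n R} (hM : ‖M‖ < 1) (x : n → R) :
    HasSum (fun t : ℕ => Mᵀ ^ t *ᵥ x) ((1 - Mᵀ)⁻¹ *ᵥ x) := by
  have hgeom : HasSum (fun t : ℕ => M ^ t) (1 - M)⁻¹ := by
    rw [nonsing_inv_eq_ringInverse]
    exact hasSum_geom_series_inverse M hM
  have hT : HasSum (fun t : ℕ => Mᵀ ^ t) (1 - Mᵀ)⁻¹ := by
    simpa [transpose_pow, transpose_nonsing_inv] using hgeom.matrix_transpose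
  exact hT.map (AddMonoidHom.mk' (· *ᵥ x) fun B C => add_mulVec B C x)
    (continuous_id.matrix_mulVec continuous_const)

end Matrix

section Convexity

lemma pi_convexHull_subset {𝕜 ι : Type*} {E : ι → Type*} [Finite ι] [DecidableEq ι]
    [Semiring 𝕜] [PartialOrder 𝕜] [∀ i, AddCommMonoid (E i)] [∀ i, Module 𝕜 (E i)]
    {V : ∀ i, Set (E i)} {C : Set (∀ i, E i)}
    (hC : ∀ x i, Convex 𝕜 {y | Function.update x i y ∈ C}) (hV : Set.univ.pi V ⊆ C) :
    Set.univ.pi (fun i => convexHull 𝕜 (V i)) ⊆ C := by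
  cases nonempty_fintype ι
  suffices h : ∀ (T : Finset ι) (x : ∀ i, E i), (∀ i ∈ T, x i ∈ convexHull 𝕜 (V i)) →
      (∀ i ∉ T, x i ∈ V i) → x ∈ C from
    fun x hx => h Finset.univ x (fun i _ => hx i trivial) (by simp)
  intro T
  induction T using Finset.induction_on with
  | empty => exact fun x _ hx => hV fun i _ => hx i (Finset.notMem_empty i)
  | insert j T hj ih =>
    intro x hxT hxV
    have hvertex : V j ⊆ {y | Function.update x j y ∈ C} := by
      intro y hy
      refine ih _ (fun i hi => ?_) fun i hi => ?_
      · rw [Function.update_of_ne (ne_of_mem_of_not_mem hi hj)]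
        exact hxT i (Finset.mem_insert_of_mem hi)
      · obtain rfl | hij := eq_or_ne i j
        · simpa using hy
        · rw [Function.update_of_ne hij]
          exact hxV i (by simp [hij, hi])
    have hxj := convexHull_min hvertex (hC x j) (hxT j (Finset.mem_insert_self j T))
    rwa [Set.mem_ofPred_eq, Function.update_eq_self] at hxj

lemma exists_convex_weights_mul_eq {𝕜 : Type*} [Field 𝕜] [LinearOrder 𝕜] [IsStrictOrderedRing 𝕜]
    {x y : 𝕜} (hx : 0 ≤ x) (hy : 0 ≤ y) :
    ∃ l m : 𝕜, 0 ≤ l ∧ 0 ≤ m ∧ l + m = 1 ∧ l * x = m * y := by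
  obtain h | h := (add_nonneg hx hy).eq_or_lt'
  · obtain ⟨rfl, rfl⟩ := (add_eq_zero_iff_of_nonneg hx hy).1 h
    exact ⟨1, 0, by simp⟩
  · exact ⟨y / (x + y), x / (x + y), by positivity, by positivity, by field_simp; ring,
      by field_simp⟩

lemma exists_mem_stdSimplex_eq_sum_smul {𝕜 ι : Type*} [Field 𝕜] [LinearOrder 𝕜]
    [IsStrictOrderedRing 𝕜] [Fintype ι] [Nonempty ι] {f : ι → 𝕜} (hf : ∀ i, 0 ≤ f i) :
    ∃ q ∈ stdSimplex 𝕜 ι, f = (∑ i, f i) • q := by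
  classical
  obtain h | h := eq_or_ne (∑ i, f i) 0
  · refine ⟨_, single_mem_stdSimplex 𝕜 (Classical.arbitrary ι), ?_⟩
    rw [h, zero_smul]
    exact (Fintype.sum_eq_zero_iff_of_nonneg hf).1 h
  · refine ⟨(∑ i, f i)⁻¹ • f, ⟨fun i => ?_, ?_⟩, (smul_inv_smul₀ h f).symm⟩
    · exact mul_nonneg (inv_nonneg.2 (Finset.sum_nonneg fun i _ => hf i)) (hf i)
    · simp [← Finset.mul_sum, h]

end Convexity

variable {S A : Type*} {P : S → A → S → ℝ} {α : S → ℝ} {γ : ℝ} {π σ : S → A → ℝ}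

lemma detPol_apply [DecidableEq A] (p : S → A) (s : S) : detPol p s = Pi.single (p s) 1 := by
  ext a
  simp [detPol, Pi.single_apply]

variable [Fintype A]

lemma isPolicy_iff_forall_mem_stdSimplex : isPolicy π ↔ ∀ s, π s ∈ stdSimplex ℝ A :=
  forall_and.symm

lemma convex_setOf_isPolicy : Convex ℝ {π : S → A → ℝ | isPolicy π} := by
  intro π hπ σ hσ a b ha hb hab
  simp only [Set.mem_ofPred_eq, isPolicy_iff_forall_mem_stdSimplex] at *
  exact fun s => convex_stdSimplex ℝ A (hπ s) (hσ s) ha hb hab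

lemma isPolicy_detPol [DecidableEq A] (p : S → A) : isPolicy (detPol p) :=
  isPolicy_iff_forall_mem_stdSimplex.2 fun s => by
    rw [detPol_apply]
    exact single_mem_stdSimplex ℝ (p s)

lemma Pmat_nonneg (hP : ∀ s a s', 0 ≤ P s a s') (hπ : isPolicy π) (s s' : S) :
    0 ≤ Pmat P π s s' :=
  Finset.sum_nonneg fun a _ => mul_nonneg (hP s a s') (hπ.1 s a)

variable [Fintype S]

lemma sum_Pmat_le_one (hPsum : ∀ s a, ∑ s', P s a s' ≤ 1) (hπ : isPolicy π) (s : S) :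
    ∑ s', Pmat P π s s' ≤ 1 :=
  calc ∑ s', Pmat P π s s' = ∑ a, (∑ s', P s a s') * π s a := by
        simp only [Pmat, of_apply, Finset.sum_mul]
        exact Finset.sum_comm
    _ ≤ ∑ a, π s a :=
        Finset.sum_le_sum fun a _ => mul_le_of_le_one_left (hπ.1 s a) (hPsum s a)
    _ = 1 := hπ.2 s

variable [DecidableEq S]

section StateOccupancy

attribute [local instance] Matrix.linftyOpSeminormedAddCommGroup Matrix.linftyOpNormedRing

lemma norm_smul_Pmat_lt_one (hP : ∀ s a s', 0 ≤ P s a s') (hPsum : ∀ s a, ∑ s', P s a s' ≤ 1)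
    (hγ0 : 0 ≤ γ) (hγ1 : γ < 1) (hπ : isPolicy π) : ‖γ • Pmat P π‖ < 1 := by
  refine (linfty_opNorm_le hγ0 fun s => ?_).trans_lt hγ1
  calc ∑ s', ‖(γ • Pmat P π) s s'‖ = γ * ∑ s', Pmat P π s s' := by
        simp [Finset.mul_sum, abs_of_nonneg, hγ0, Pmat_nonneg hP hπ]
    _ ≤ γ := mul_le_of_le_one_right hγ0 (sum_Pmat_le_one hPsum hπ s)

lemma dOcc_eq_inv_mulVec (h : ‖γ • Pmat P π‖ < 1) :
    dOcc P α γ π = (1 - (γ • Pmat P π)ᵀ)⁻¹ *ᵥ ((1 - γ) • α) := by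
  ext s
  have hsum := Pi.hasSum.1 (hasSum_transpose_pow_mulVec h α) s
  simp only [transpose_smul, smul_pow, smul_mulVec, Pi.smul_apply, smul_eq_mul] at hsum
  rw [dOcc, hsum.tsum_eq, transpose_smul, mulVec_smul, Pi.smul_apply, smul_eq_mul]

lemma eq_dOcc_iff (hP : ∀ s a s', 0 ≤ P s a s') (hPsum : ∀ s a, ∑ s', P s a s' ≤ 1)
    (hγ0 : 0 ≤ γ) (hγ1 : γ < 1) (hπ : isPolicy π) {d : S → ℝ} :
    d = dOcc P α γ π ↔ (1 - (γ • Pmat P π)ᵀ) *ᵥ d = (1 - γ) • α := by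
  have hnorm := norm_smul_Pmat_lt_one hP hPsum hγ0 hγ1 hπ
  have hdet := (isUnit_iff_isUnit_det _).1 (isUnit_one_sub_transpose hnorm)
  rw [dOcc_eq_inv_mulVec hnorm]
  constructor
  · rintro rfl
    rw [mulVec_mulVec, mul_nonsing_inv _ hdet, one_mulVec]
  · intro h
    rw [← h, mulVec_mulVec, nonsing_inv_mul _ hdet, one_mulVec]

end StateOccupancy

lemma dOcc_nonneg (hP : ∀ s a s', 0 ≤ P s a s') (hα : ∀ s, 0 ≤ α s) (hγ0 : 0 ≤ γ) (hγ1 : γ ≤ 1)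
    (hπ : isPolicy π) (s : S) : 0 ≤ dOcc P α γ π s := by
  have hiter (t : ℕ) : ∀ s, 0 ≤ ((Pmat P π)ᵀ ^ t *ᵥ α) s := by
    induction t with
    | zero => simpa using hα
    | succ t ih =>
      intro s
      rw [pow_succ', ← mulVec_mulVec]
      exact Finset.sum_nonneg fun s' _ => mul_nonneg (Pmat_nonneg hP hπ s' s) (ih s')
  exact mul_nonneg (sub_nonneg.2 hγ1)
    (tsum_nonneg fun t => mul_nonneg (pow_nonneg hγ0 t) (hiter t s))

lemma convex_Uset : Convex ℝ (Uset P α γ) := by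
  rintro u ⟨hu, hAu⟩ v ⟨hv, hAv⟩ a b ha hb hab
  refine ⟨fun w => add_nonneg (mul_nonneg ha (hu w)) (mul_nonneg hb (hv w)), ?_⟩
  rw [mulVec_add, mulVec_smul, mulVec_smul, hAu, hAv, Convex.combo_self hab]

lemma Amat_transpose_mulVec_eq_of_forall_eq_mul (hπ : ∀ s, ∑ a, π s a = 1) {u : S × A → ℝ}
    {d : S → ℝ} (hu : ∀ s a, u (s, a) = d s * π s a) :
    (Amat P γ)ᵀ *ᵥ u = (1 - (γ • Pmat P π)ᵀ) *ᵥ d := by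
  ext s'
  have hinner (s : S) : ∑ a, ((if s = s' then 1 else 0) - γ * P s a s') * (d s * π s a) =
      ((if s = s' then 1 else 0) - γ * Pmat P π s s') * d s := by
    calc _ = (if s = s' then 1 else 0) * d s * ∑ a, π s a - γ * (∑ a, P s a s' * π s a) * d s := by
          simp only [Finset.mul_sum, Finset.sum_mul, ← Finset.sum_sub_distrib]
          exact Finset.sum_congr rfl fun a _ => by ring
      _ = _ := by rw [hπ, Pmat, of_apply]; ring
  simp only [mulVec, dotProduct, transpose_apply, Amat, of_apply, Fintype.sum_prod_type, hu, hinner,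
    Matrix.sub_apply, Matrix.smul_apply, one_apply, smul_eq_mul, eq_comm (a := s')]

lemma eq_uOcc_of_mem_Uset (hP : ∀ s a s', 0 ≤ P s a s') (hPsum : ∀ s a, ∑ s', P s a s' ≤ 1)
    (hγ0 : 0 ≤ γ) (hγ1 : γ < 1) (hπ : isPolicy π) {u : S × A → ℝ} (huU : u ∈ Uset P α γ)
    {d : S → ℝ} (hu : ∀ s a, u (s, a) = d s * π s a) : u = uOcc P α γ π := by
  have hd : d = dOcc P α γ π := (eq_dOcc_iff hP hPsum hγ0 hγ1 hπ).2 <|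
    (Amat_transpose_mulVec_eq_of_forall_eq_mul hπ.2 hu).symm.trans huU.2
  ext ⟨s, a⟩
  rw [hu, hd, uOcc]

lemma uOcc_mem_Uset (hP : ∀ s a s', 0 ≤ P s a s') (hPsum : ∀ s a, ∑ s', P s a s' ≤ 1)
    (hα : ∀ s, 0 ≤ α s) (hγ0 : 0 ≤ γ) (hγ1 : γ < 1) (hπ : isPolicy π) :
    uOcc P α γ π ∈ Uset P α γ :=
  ⟨fun w => mul_nonneg (dOcc_nonneg hP hα hγ0 hγ1.le hπ w.1) (hπ.1 w.1 w.2),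
    (Amat_transpose_mulVec_eq_of_forall_eq_mul hπ.2 fun _ _ => rfl).trans <|
      (eq_dOcc_iff hP hPsum hγ0 hγ1 hπ).1 rfl⟩

lemma nonempty_pi_of_mem_Uset (hα : α ≠ 0) (hγ : γ ≠ 1) {u : S × A → ℝ} (hu : u ∈ Uset P α γ) :
    Nonempty (S → A) := by
  by_contra hempty
  obtain ⟨_, _⟩ := isEmpty_pi.1 (not_nonempty_iff.1 hempty)
  have hflow : (1 - γ) • α = 0 := by
    rw [← mulVec_zero (Amat P γ)ᵀ, ← Subsingleton.elim u 0]
    exact hu.2.symm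
  exact (smul_ne_zero (sub_ne_zero.2 hγ.symm) hα) hflow

lemma exists_isPolicy_eq_uOcc (hP : ∀ s a s', 0 ≤ P s a s') (hPsum : ∀ s a, ∑ s', P s a s' ≤ 1)
    (hγ0 : 0 ≤ γ) (hγ1 : γ < 1) [Nonempty (S → A)] {u : S × A → ℝ} (hu : u ∈ Uset P α γ) :
    ∃ π : S → A → ℝ, isPolicy π ∧ u = uOcc P α γ π := by
  have hrow (s : S) : ∃ q ∈ stdSimplex ℝ A, (fun a => u (s, a)) = (∑ a, u (s, a)) • q :=
    have : Nonempty A := ⟨Classical.arbitrary (S → A) s⟩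
    exists_mem_stdSimplex_eq_sum_smul fun a => hu.1 (s, a)
  choose π hπ hfactor using hrow
  have hπ : isPolicy π := isPolicy_iff_forall_mem_stdSimplex.2 hπ
  exact ⟨π, hπ, eq_uOcc_of_mem_Uset hP hPsum hγ0 hγ1 hπ hu fun s a => congrFun (hfactor s) a⟩

lemma uOcc_combo_mem_segment (hP : ∀ s a s', 0 ≤ P s a s') (hPsum : ∀ s a, ∑ s', P s a s' ≤ 1)
    (hα : ∀ s, 0 ≤ α s) (hγ0 : 0 ≤ γ) (hγ1 : γ < 1) (hπ : isPolicy π) (hσ : isPolicy σ) {s : S}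
    (hs : ∀ t ≠ s, π t = σ t) {a b : ℝ} (ha : 0 ≤ a) (hb : 0 ≤ b) (hab : a + b = 1) :
    uOcc P α γ (a • π + b • σ) ∈ segment ℝ (uOcc P α γ π) (uOcc P α γ σ) := by
  -- Mixing the occupancy frequencies with weights `l, m` mixes the rows at `s` in the ratio
  -- `l d_π(s) : m d_σ(s)`, which has to be `a : b`.
  obtain ⟨l, m, hl, hm, hlm, hratio⟩ := exists_convex_weights_mul_eq
    (mul_nonneg hb (dOcc_nonneg hP hα hγ0 hγ1.le hπ s))
    (mul_nonneg ha (dOcc_nonneg hP hα hγ0 hγ1.le hσ s))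
  have hmem : l • uOcc P α γ π + m • uOcc P α γ σ ∈ Uset P α γ :=
    convex_Uset (uOcc_mem_Uset hP hPsum hα hγ0 hγ1 hπ) (uOcc_mem_Uset hP hPsum hα hγ0 hγ1 hσ)
      hl hm hlm
  have hfactor (t : S) (c : A) : (l • uOcc P α γ π + m • uOcc P α γ σ) (t, c) =
      (l • dOcc P α γ π + m • dOcc P α γ σ) t * (a • π + b • σ) t c := by
    obtain rfl : b = 1 - a := by linarith
    simp only [uOcc, Pi.add_apply, Pi.smul_apply, smul_eq_mul]
    obtain rfl | ht := eq_or_ne t s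
    · linear_combination (π t c - σ t c) * hratio
    · rw [hs t ht]
      ring
  exact ⟨l, m, hl, hm, hlm,
    eq_uOcc_of_mem_Uset hP hPsum hγ0 hγ1 (convex_setOf_isPolicy hπ hσ ha hb hab) hmem hfactor⟩

lemma convex_setOf_update_uOcc_mem (hP : ∀ s a s', 0 ≤ P s a s')
    (hPsum : ∀ s a, ∑ s', P s a s' ≤ 1) (hα : ∀ s, 0 ≤ α s) (hγ0 : 0 ≤ γ) (hγ1 : γ < 1)
    {H : Set (S × A → ℝ)} (hH : Convex ℝ H) (π : S → A → ℝ) (s : S) :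
    Convex ℝ {q | Function.update π s q ∈ {σ | isPolicy σ ∧ uOcc P α γ σ ∈ H}} := by
  rintro q ⟨hq, hqH⟩ r ⟨hr, hrH⟩ a b ha hb hab
  have hupdate : Function.update π s (a • q + b • r) =
      a • Function.update π s q + b • Function.update π s r := by
    rw [← Function.update_smul, ← Function.update_smul, ← Function.update_add,
      Convex.combo_self hab]
  rw [Set.mem_ofPred_eq, hupdate]
  exact ⟨convex_setOf_isPolicy hq hr ha hb hab, hH.segment_subset hqH hrH <|
    uOcc_combo_mem_segment hP hPsum hα hγ0 hγ1 hq hr (s := s)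
      (fun t ht => by simp [Function.update_of_ne ht]) ha hb hab⟩

variable [DecidableEq A]

lemma uOcc_mem_convexHull_detPol (hP : ∀ s a s', 0 ≤ P s a s')
    (hPsum : ∀ s a, ∑ s', P s a s' ≤ 1) (hα : ∀ s, 0 ≤ α s) (hγ0 : 0 ≤ γ) (hγ1 : γ < 1)
    (hπ : isPolicy π) :
    uOcc P α γ π ∈ convexHull ℝ {u | ∃ p : S → A, u = uOcc P α γ (detPol p)} := by
  set H := convexHull ℝ {u | ∃ p : S → A, u = uOcc P α γ (detPol p)}
  have hdet : Set.univ.pi (fun _ : S => Set.range fun a : A => (Pi.single a 1 : A → ℝ)) ⊆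
      {σ | isPolicy σ ∧ uOcc P α γ σ ∈ H} := by
    intro σ hσ
    choose p hp using fun s => hσ s trivial
    obtain rfl : detPol p = σ := funext fun s => (detPol_apply p s).trans (hp s)
    exact ⟨isPolicy_detPol p, subset_convexHull ℝ _ ⟨p, rfl⟩⟩
  refine (pi_convexHull_subset (𝕜 := ℝ) (convex_setOf_update_uOcc_mem hP hPsum hα hγ0 hγ1
    (convex_convexHull ℝ _)) hdet fun s _ => ?_).2
  rw [convexHull_rangle_single_eq_stdSimplex]
  exact isPolicy_iff_forall_mem_stdSimplex.1 hπ s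

end DRADP

theorem Uset_eq_occupancies_general {S A : Type*} [Fintype S] [Fintype A] [DecidableEq S]
    [DecidableEq A] (P : S → A → S → ℝ) (α : S → ℝ) (γ : ℝ)
    (hP : ∀ s a s', 0 ≤ P s a s') (hPsum : ∀ s a, ∑ s', P s a s' ≤ 1)
    (hα : ∀ s, 0 ≤ α s) (hne : α = 0 → Nonempty (S → A))
    (hγ0 : 0 ≤ γ) (hγ1 : γ < 1) :
    Uset P α γ = {u | ∃ π : S → A → ℝ, isPolicy π ∧ u = uOcc P α γ π} ∧
    Uset P α γ = convexHull ℝ {u | ∃ p : S → A, u = uOcc P α γ (detPol p)} := by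
  have hrand : Uset P α γ = {u | ∃ π : S → A → ℝ, isPolicy π ∧ u = uOcc P α γ π} := by
    refine Set.Subset.antisymm (fun u hu => ?_) ?_
    · have : Nonempty (S → A) :=
        (eq_or_ne α 0).elim hne fun hα0 => nonempty_pi_of_mem_Uset hα0 hγ1.ne hu
      exact exists_isPolicy_eq_uOcc hP hPsum hγ0 hγ1 hu
    · rintro _ ⟨π, hπ, rfl⟩
      exact uOcc_mem_Uset hP hPsum hα hγ0 hγ1 hπ
  refine ⟨hrand, Set.Subset.antisymm ?_ (convexHull_min ?_ convex_Uset)⟩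
  · rw [hrand]
    rintro _ ⟨π, hπ, rfl⟩
    exact uOcc_mem_convexHull_detPol hP hPsum hα hγ0 hγ1 hπ
  · rintro _ ⟨p, rfl⟩
    exact uOcc_mem_Uset hP hPsum hα hγ0 hγ1 (isPolicy_detPol p)

/-- `U` equals the set of occupancy frequencies of randomized policies and the
convex hull of the occupancy frequencies of deterministic policies. -/
theorem Uset_eq_occupancies {S A : Type*} [Fintype S] [Fintype A] [DecidableEq S] [DecidableEq A]
    (P : S → A → S → ℝ) (α : S → ℝ) (γ : ℝ)
    (hP : ∀ s a s', 0 ≤ P s a s') (hPsum : ∀ s a, ∑ s', P s a s' = 1)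
    (hα : ∀ s, 0 ≤ α s) (hαsum : ∑ s, α s = 1)
    (hγ0 : 0 ≤ γ) (hγ1 : γ < 1) :
    Uset P α γ = {u | ∃ π : S → A → ℝ, isPolicy π ∧ u = uOcc P α γ π} ∧
    Uset P α γ = convexHull ℝ {u | ∃ p : S → A, u = uOcc P α γ (detPol p)} :=
  Uset_eq_occupancies_general P α γ hP (fun s a => (hPsum s a).le) hα
    (by rintro rfl; simp at hαsum) hγ0 hγ1
end

section
/- Suppose the all-ones vector 1 lies in the column span of the feature matrix Φ. Then for every randomized policy π and every u ∈ Ũ(π), one has 1ᵀu = 1, i.e. ∑_{(s,a)} u(s,a) = 1. -/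
open Matrix BigOperators

open DRADP

/-!
Pairing the projected flow equation `Φᵀ Aᵀ u = (1 - γ) Φᵀ α` with coefficients `x` for which
`Φ x = 1` recovers `1ᵀ Aᵀ u = (1 - γ) 1ᵀ α`. Since the rows of `P` sum to one, `A 1 = (1 - γ) 1`,
so the left-hand side is `(1 - γ) 1ᵀ u`, and `1 - γ` cancels.
-/

namespace DRADP

theorem dotProduct_mulVec_eq_of_transpose_mulVec_eq {m n R : Type*} [Fintype m] [Fintype n]
    [NonUnitalCommSemiring R] {Φ : Matrix m n R} {y z : m → R} (h : Φᵀ *ᵥ y = Φᵀ *ᵥ z)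
    (x : n → R) : y ⬝ᵥ Φ *ᵥ x = z ⬝ᵥ Φ *ᵥ x := by
  rw [← dotProduct_transpose_mulVec, h, dotProduct_transpose_mulVec]

theorem Amat_mulVec_one {S A : Type*} [Fintype S] [DecidableEq S] {P : S → A → S → ℝ}
    (hPsum : ∀ s a, ∑ s', P s a s' = 1) (γ : ℝ) :
    Amat P γ *ᵥ 1 = (1 - γ) • (1 : S × A → ℝ) := by
  ext w
  simp [Amat, mulVec, dotProduct_one, Finset.sum_sub_distrib, ← Finset.mul_sum, hPsum]

theorem sum_transpose_Amat_mulVec {S A : Type*} [Fintype S] [Fintype A] [DecidableEq S]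
    {P : S → A → S → ℝ} (hPsum : ∀ s a, ∑ s', P s a s' = 1) (γ : ℝ) (u : S × A → ℝ) :
    ∑ s, ((Amat P γ)ᵀ *ᵥ u) s = (1 - γ) * ∑ w, u w := by
  rw [← one_dotProduct, dotProduct_transpose_mulVec, Amat_mulVec_one hPsum, dotProduct_smul,
    dotProduct_one, smul_eq_mul]

end DRADP

theorem sum_eq_one_of_mem_Utilde_general {S A K : Type*} [Fintype S] [Fintype A] [Fintype K]
    [DecidableEq S] {P : S → A → S → ℝ} (hPsum : ∀ s a, ∑ s', P s a s' = 1)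
    {γ : ℝ} (hγ : γ ≠ 1) {Φ : Matrix S K ℝ} (hone : ∃ x : K → ℝ, Φ *ᵥ x = 1)
    {α : S → ℝ} {u : S × A → ℝ}
    (hu : Φᵀ *ᵥ ((Amat P γ)ᵀ *ᵥ u) = (1 - γ) • (Φᵀ *ᵥ α)) :
    ∑ w, u w = ∑ s, α s := by
  obtain ⟨x, hx⟩ := hone
  have hpair : (Amat P γ)ᵀ *ᵥ u ⬝ᵥ Φ *ᵥ x = (1 - γ) • α ⬝ᵥ Φ *ᵥ x :=
    dotProduct_mulVec_eq_of_transpose_mulVec_eq (hu.trans (mulVec_smul ..).symm) x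
  refine mul_left_cancel₀ (sub_ne_zero.mpr hγ.symm) ?_
  calc
    (1 - γ) * ∑ w, u w = ∑ s, ((Amat P γ)ᵀ *ᵥ u) s := (sum_transpose_Amat_mulVec hPsum γ u).symm
    _ = (1 - γ) • α ⬝ᵥ 1 := by rw [← dotProduct_one, ← hx, hpair]
    _ = (1 - γ) * ∑ s, α s := by rw [smul_dotProduct, dotProduct_one, smul_eq_mul]

/-- if the all-ones vector lies in the column span of `Φ`, then every
`u ∈ Ũ(π)` sums to one. -/
theorem sum_eq_one_of_mem_Utilde {S A K : Type*} [Fintype S] [Fintype A] [Fintype K]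
    [DecidableEq S]
    (P : S → A → S → ℝ) (α : S → ℝ) (γ : ℝ) (Φ : Matrix S K ℝ)
    (hP : ∀ s a s', 0 ≤ P s a s') (hPsum : ∀ s a, ∑ s', P s a s' = 1)
    (hα : ∀ s, 0 ≤ α s) (hαsum : ∑ s, α s = 1)
    (hγ0 : 0 ≤ γ) (hγ1 : γ < 1)
    (hone : ∃ x : K → ℝ, Φ *ᵥ x = fun _ => (1 : ℝ))
    (π : S → A → ℝ) (hπ : isPolicy π)
    (u : S × A → ℝ) (hu : u ∈ Utilde P α γ Φ π) :
    ∑ w : S × A, u w = 1 :=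
  (sum_eq_one_of_mem_Utilde_general hPsum hγ1.ne hone hu.2.1).trans hαsum
end
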